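/- Let S be a compact Hausdorff space equipped with its Baire σ-algebra 𝒮 (the smallest σ-algebra making all continuous real-valued functions on S measurable). If {X_n ; n ≥ 1} is an exchangeable process with values in S, then there exists a unique measure μ on the Baire σ-algebra of ℳ(S) such that, for each k ≥ 1, the law P_k of X_1^k admits the representation P_k = M_{k,μ}, i.e., P_k(A) = ∫_{ℳ(S)} Q^k(A) dμ(Q) for all A in the product σ-algebra 𝒮^k. -/

import Mathlib

open MeasureTheory
open scoped ENNReal

/-- The Baire σ-algebra of a topological space: the smallest σ-algebra making all
continuous real-valued functions measurable. -/
def baireSigma (X : Type*) [TopologicalSpace X] : MeasurableSpace X :=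
  ⨆ f : C(X, ℝ), MeasurableSpace.comap f (borel ℝ)

/-- The weak topology on the space `ℳ(S)` of probability measures on `S`: the topology
induced by the maps `Q ↦ ∫ f dQ`, `f : S → ℝ` continuous. -/
noncomputable def weakTopology (S : Type*) [TopologicalSpace S] [MeasurableSpace S] :
    TopologicalSpace (ProbabilityMeasure S) :=
  TopologicalSpace.induced
    (fun (Q : ProbabilityMeasure S) (f : C(S, ℝ)) => ∫ x, f x ∂(Q : Measure S))
    inferInstance

/-- The Baire σ-algebra on `ℳ(S)`, for the weak topology. -/
noncomputable def baireOnProbabilityMeasures (S : Type*) [TopologicalSpace S]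
    [MeasurableSpace S] : MeasurableSpace (ProbabilityMeasure S) :=
  @baireSigma (ProbabilityMeasure S) (weakTopology S)

namespace HS

set_option linter.unusedSectionVars false

open Filter Topology

/-- The σ-algebra of the space is its Baire σ-algebra. -/
class BaireMeas (X : Type*) [TopologicalSpace X] [m : MeasurableSpace X] : Prop where
  eq : m = baireSigma X

section Basic

variable {X : Type*} [TopologicalSpace X] [m : MeasurableSpace X]

theorem measurable_cont [BaireMeas X] (f : C(X, ℝ)) : Measurable f := by
  rw [measurable_iff_comap_le, BaireMeas.eq (X := X), BorelSpace.measurable_eq (α := ℝ)]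
  exact le_iSup (fun f : C(X, ℝ) => MeasurableSpace.comap f (borel ℝ)) f

theorem integrable_cont [BaireMeas X] [CompactSpace X] (μ : Measure X) [IsFiniteMeasure μ]
    (f : C(X, ℝ)) : Integrable f μ :=
  Integrable.of_bound (measurable_cont f).aestronglyMeasurable ‖f‖
    (Eventually.of_forall fun x => f.norm_coe_le_norm x)

/-- approximants of the indicator of `{f > 0}` -/
noncomputable def approx (f : C(X, ℝ)) (n : ℕ) : C(X, ℝ) :=
  ⟨fun x => min 1 (n * max (f x) 0), by fun_prop⟩

theorem approx_nonneg (f : C(X, ℝ)) (n : ℕ) (x : X) : 0 ≤ approx f n x := by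
  simp only [approx, ContinuousMap.coe_mk]; positivity

theorem approx_le (f : C(X, ℝ)) (n : ℕ) (x : X) : approx f n x ≤ 1 := by
  simp [approx]

theorem approx_tendsto (f : C(X, ℝ)) (x : X) :
    Tendsto (fun n => approx f n x) atTop (𝓝 (Set.indicator {x | 0 < f x} (fun _ => (1:ℝ)) x)) := by
  by_cases h : 0 < f x
  · rw [Set.indicator_of_mem (by exact h)]
    apply tendsto_const_nhds.congr'
    obtain ⟨N, hN⟩ := exists_nat_gt (1 / f x)
    filter_upwards [eventually_ge_atTop N] with n hn
    simp only [approx, ContinuousMap.coe_mk]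
    rw [max_eq_left h.le, min_eq_left]
    rw [div_lt_iff₀ h] at hN
    have : (N:ℝ) ≤ n := by exact_mod_cast hn
    nlinarith
  · rw [Set.indicator_of_notMem (by exact h)]
    apply tendsto_const_nhds.congr'
    filter_upwards with n
    simp [approx, max_eq_right (not_lt.mp h)]

/-- positivity sets of continuous functions -/
def posSets (X : Type*) [TopologicalSpace X] : Set (Set X) := {A | ∃ f : C(X, ℝ), A = {x | 0 < f x}}

theorem isPiSystem_posSets : IsPiSystem (posSets X) := by
  rintro _ ⟨f, rfl⟩ _ ⟨g, rfl⟩ _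
  refine ⟨f ⊓ g, ?_⟩
  ext x; simp

theorem univ_mem_posSets : Set.univ ∈ posSets X := ⟨1, by ext; simp⟩

theorem generateFrom_posSets [BaireMeas X] : MeasurableSpace.generateFrom (posSets X) = m := by
  apply le_antisymm
  · apply MeasurableSpace.generateFrom_le
    rintro _ ⟨f, rfl⟩
    exact measurableSet_lt measurable_const (measurable_cont f)
  · rw [BaireMeas.eq (X := X)]
    refine iSup_le fun f => ?_
    rw [← BorelSpace.measurable_eq (α := ℝ), ← measurable_iff_comap_le]
    refine @measurable_of_Ioi _ X _ _ _ (MeasurableSpace.generateFrom (posSets X)) _ _ _ f ?_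
    intro a
    apply MeasurableSpace.measurableSet_generateFrom
    refine ⟨f - ContinuousMap.const X a, ?_⟩
    ext x; simp

theorem measurableSet_pos [BaireMeas X] (f : C(X, ℝ)) : MeasurableSet {x | 0 < f x} :=
  measurableSet_lt measurable_const (measurable_cont f)

theorem tendsto_integral_approx [BaireMeas X] (μ : Measure X) [IsFiniteMeasure μ] (f : C(X, ℝ)) :
    Tendsto (fun n => ∫ x, approx f n x ∂μ) atTop (𝓝 (μ.real {x | 0 < f x})) := by
  have h : μ.real {x | 0 < f x} = ∫ x, Set.indicator {x | 0 < f x} (fun _ => (1:ℝ)) x ∂μ := by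
    rw [integral_indicator_const _ (measurableSet_pos f)]; simp
  rw [h]
  apply tendsto_integral_of_dominated_convergence (fun _ => (1:ℝ))
  · intro n; exact (measurable_cont _).aestronglyMeasurable
  · exact integrable_const _
  · intro n; filter_upwards with x
    rw [Real.norm_of_nonneg (approx_nonneg f n x)]; exact approx_le f n x
  · filter_upwards with x; exact approx_tendsto f x

theorem ext_integral [BaireMeas X] (μ ν : Measure X) [IsFiniteMeasure μ] [IsFiniteMeasure ν]
    (h : ∀ f : C(X, ℝ), ∫ x, f x ∂μ = ∫ x, f x ∂ν) : μ = ν := by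
  have key : ∀ s ∈ posSets X, μ s = ν s := by
    rintro _ ⟨f, rfl⟩
    rw [← measureReal_eq_measureReal_iff]
    refine tendsto_nhds_unique (tendsto_integral_approx μ f) ?_
    simp_rw [h]
    exact tendsto_integral_approx ν f
  exact ext_of_generate_finite _ generateFrom_posSets.symm isPiSystem_posSets key
    (key _ univ_mem_posSets)

theorem generateFrom_boxes [BaireMeas X] (k : ℕ) :
    MeasurableSpace.generateFrom (Set.pi Set.univ '' Set.pi Set.univ fun _ : Fin k => posSets X)
      = (MeasurableSpace.pi : MeasurableSpace (Fin k → X)) := by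
  apply generateFrom_eq_pi
  · intro _; exact generateFrom_posSets
  · intro _; exact ⟨fun _ => Set.univ, fun _ => univ_mem_posSets, by simp [Set.iUnion_const]⟩

theorem isPiSystem_boxes (k : ℕ) :
    IsPiSystem (Set.pi Set.univ '' Set.pi Set.univ fun _ : Fin k => posSets X) :=
  IsPiSystem.pi fun _ => isPiSystem_posSets

theorem measurable_prod_cont [BaireMeas X] {k : ℕ} (f : Fin k → C(X, ℝ)) :
    Measurable (fun x : Fin k → X => ∏ i, f i (x i)) :=
  Finset.measurable_prod _ fun i _ => (measurable_cont (f i)).comp (measurable_pi_apply i)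

theorem tendsto_integral_prod_approx [BaireMeas X] {k : ℕ} (μ : Measure (Fin k → X))
    [IsFiniteMeasure μ] (f : Fin k → C(X, ℝ)) :
    Tendsto (fun n => ∫ x, ∏ i, approx (f i) n (x i) ∂μ) atTop
      (𝓝 (μ.real (Set.pi Set.univ fun i => {x | 0 < f i x}))) := by
  have hm : MeasurableSet (Set.pi Set.univ fun i => {x | 0 < f i x}) :=
    MeasurableSet.univ_pi fun i => measurableSet_pos (f i)
  have h : μ.real (Set.pi Set.univ fun i => {x | 0 < f i x}) =
      ∫ x, Set.indicator (Set.pi Set.univ fun i => {x | 0 < f i x}) (fun _ => (1:ℝ)) x ∂μ := by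
    rw [integral_indicator_const _ hm]; simp
  rw [h]
  apply tendsto_integral_of_dominated_convergence (fun _ => (1:ℝ))
  · intro n; exact (measurable_prod_cont _).aestronglyMeasurable
  · exact integrable_const _
  · intro n; filter_upwards with x
    rw [Real.norm_of_nonneg (Finset.prod_nonneg fun i _ => approx_nonneg _ n _)]
    exact Finset.prod_le_one (fun i _ => approx_nonneg _ n _) (fun i _ => approx_le _ n _)
  · filter_upwards with x
    have e : Set.indicator (Set.pi Set.univ fun i => {x | 0 < f i x}) (fun _ => (1:ℝ)) x
        = ∏ i, Set.indicator {x | 0 < f i x} (fun _ => (1:ℝ)) (x i) := by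
      by_cases hx : ∀ i, 0 < f i (x i)
      · rw [Set.indicator_of_mem (by simpa using hx), Finset.prod_eq_one]
        intro i _
        exact Set.indicator_of_mem (s := {x | 0 < f i x}) (hx i) _
      · rw [Set.indicator_of_notMem (by simpa using hx)]
        push Not at hx
        obtain ⟨i, hi⟩ := hx
        symm
        apply Finset.prod_eq_zero (Finset.mem_univ i)
        exact Set.indicator_of_notMem (s := {x | 0 < f i x}) (by simpa using hi) _
    rw [e]
    exact tendsto_finsetProd _ fun i _ => approx_tendsto (f i) (x i)

theorem ext_integral_pi [BaireMeas X] {k : ℕ} (μ ν : Measure (Fin k → X)) [IsFiniteMeasure μ]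
    [IsFiniteMeasure ν]
    (h : ∀ f : Fin k → C(X, ℝ), ∫ x, ∏ i, f i (x i) ∂μ = ∫ x, ∏ i, f i (x i) ∂ν) : μ = ν := by
  have key : ∀ s ∈ (Set.pi Set.univ '' Set.pi Set.univ fun _ : Fin k => posSets X), μ s = ν s := by
    rintro _ ⟨s, hs, rfl⟩
    have : ∀ i, ∃ f : C(X, ℝ), s i = {x | 0 < f x} := fun i => hs i (Set.mem_univ i)
    choose f hf using this
    obtain rfl : s = fun i => {x | 0 < f i x} := funext hf
    rw [← measureReal_eq_measureReal_iff]
    refine tendsto_nhds_unique (tendsto_integral_prod_approx μ f) ?_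
    simp_rw [h]
    exact tendsto_integral_prod_approx ν f
  exact ext_of_generate_finite _ (generateFrom_boxes k).symm (isPiSystem_boxes k) key
    (key _ ⟨fun _ => Set.univ, fun _ _ => univ_mem_posSets, by simp⟩)

theorem baire_le_borel : baireSigma X ≤ borel X := by
  refine iSup_le fun f => ?_
  exact (@Measurable.comap_le _ _ (borel X) (borel ℝ) f
    (@Continuous.borel_measurable _ _ _ _ f f.continuous))

theorem riesz_baire [BaireMeas X] [CompactSpace X] [T2Space X] (L : C(X, ℝ) →ₗ[ℝ] ℝ)
    (hL : ∀ f, 0 ≤ f → 0 ≤ L f) : ∃ μ : Measure X, IsFiniteMeasure μ ∧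
      ∀ f : C(X, ℝ), ∫ x, f x ∂μ = L f := by
  obtain ⟨ν, hν, h⟩ : ∃ ν : @Measure X (borel X), @IsFiniteMeasure X (borel X) ν ∧
      ∀ f : C(X, ℝ), @integral X ℝ _ _ (borel X) ν f = L f := by
    letI : MeasurableSpace X := borel X
    haveI : BorelSpace X := ⟨rfl⟩
    let Λ : CompactlySupportedContinuousMap X ℝ →ₚ[ℝ] ℝ :=
      PositiveLinearMap.mk₀
        { toFun := fun f => L f.toContinuousMap
          map_add' := fun f g => L.map_add _ _
          map_smul' := fun c f => L.map_smul c _ } (fun f hf => hL _ hf)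
    refine ⟨RealRMK.rieszMeasure Λ, inferInstance, fun f => ?_⟩
    exact RealRMK.integral_rieszMeasure Λ
      (CompactlySupportedContinuousMap.continuousMapEquiv f)
  have hle : m ≤ borel X := by rw [BaireMeas.eq (X := X)]; exact baire_le_borel
  refine ⟨@Measure.trim X m (borel X) ν hle, @isFiniteMeasure_trim _ _ (borel X) _ hle hν, fun f => ?_⟩
  rw [← h f]
  exact (@integral_trim _ _ _ _ m (borel X) ν hle f (measurable_cont f).stronglyMeasurable).symm

end Basic

section Space

/-- The space of probability measures, with weak topology and Baire σ-algebra. -/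
def KM (S : Type*) [TopologicalSpace S] [MeasurableSpace S] := ProbabilityMeasure S

variable {S : Type*} [TopologicalSpace S] [MeasurableSpace S]

noncomputable instance : TopologicalSpace (KM S) := weakTopology S

noncomputable instance : MeasurableSpace (KM S) := baireOnProbabilityMeasures S

instance : BaireMeas (KM S) := ⟨rfl⟩

/-- The underlying measure. -/
noncomputable def KM.meas (Q : KM S) : Measure S := (@ProbabilityMeasure.toMeasure S _ Q)

instance (Q : KM S) : IsProbabilityMeasure Q.meas :=
  (show ProbabilityMeasure S from Q).2

/-- Constructor from a measure. -/
def KM.mk (μ : Measure S) (h : IsProbabilityMeasure μ) : KM S := (⟨μ, h⟩ : ProbabilityMeasure S)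

theorem KM.mk_meas (μ : Measure S) (h : IsProbabilityMeasure μ) : (KM.mk μ h).meas = μ := rfl

theorem KM.ext {Q R : KM S} (h : Q.meas = R.meas) : Q = R := Subtype.ext h

theorem inducing_KM : IsInducing (fun (Q : KM S) (f : C(S, ℝ)) => ∫ x, f x ∂Q.meas) := ⟨rfl⟩

/-- Evaluation -/
noncomputable def ev (f : C(S, ℝ)) : C(KM S, ℝ) :=
  ⟨fun Q => ∫ x, f x ∂Q.meas, (continuous_apply f).comp inducing_KM.continuous⟩

theorem ev_apply (f : C(S, ℝ)) (Q : KM S) : ev f Q = ∫ x, f x ∂Q.meas := rfl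

instance [BaireMeas S] : T2Space (KM S) := by
  refine T2Space.of_injective_continuous (f := fun (Q : KM S) (f : C(S, ℝ)) => ∫ x, f x ∂Q.meas) ?_
    inducing_KM.continuous
  intro Q R h
  exact KM.ext (ext_integral _ _ fun f => congrFun h f)

theorem abs_ev_le [BaireMeas S] [CompactSpace S] (f : C(S, ℝ)) (Q : KM S) : |ev f Q| ≤ ‖f‖ := by
  have := norm_integral_le_of_norm_le_const (μ := Q.meas)
    (Eventually.of_forall fun x => f.norm_coe_le_norm x)
  simpa [ev_apply] using this

instance [BaireMeas S] [CompactSpace S] [T2Space S] : CompactSpace (KM S) := by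
  refine ⟨isCompact_iff_ultrafilter_le_nhds.2 fun U _ => ?_⟩
  have hex : ∀ f : C(S, ℝ), ∃ l, Tendsto (fun Q : KM S => ev f Q) U (𝓝 l) := by
    intro f
    have hc : IsCompact (Set.Icc (-‖f‖) ‖f‖) := isCompact_Icc
    obtain ⟨l, -, hl⟩ := isCompact_iff_ultrafilter_le_nhds.1 hc (U.map (ev f)) (by
      rw [le_principal_iff]
      refine Ultrafilter.mem_map.2 (Filter.univ_mem' fun Q => ?_)
      exact abs_le.1 (abs_ev_le f Q))
    exact ⟨l, hl⟩
  choose l hl using hex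
  let L : C(S, ℝ) →ₗ[ℝ] ℝ :=
    { toFun := l
      map_add' := fun f g => by
        refine tendsto_nhds_unique (hl (f + g)) (((hl f).add (hl g)).congr fun Q => ?_)
        simp only [ev_apply, ContinuousMap.add_apply]
        rw [integral_add (integrable_cont _ f) (integrable_cont _ g)]
      map_smul' := fun c f => by
        refine tendsto_nhds_unique (hl (c • f)) (((hl f).const_mul c).congr fun Q => ?_)
        simp only [ev_apply, ContinuousMap.smul_apply, smul_eq_mul]
        rw [integral_const_mul] }
  obtain ⟨μ, hμ, h⟩ := riesz_baire L (fun f hf => by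
    refine ge_of_tendsto (hl f) (Eventually.of_forall fun Q => ?_)
    exact integral_nonneg fun x => hf x)
  have hp : IsProbabilityMeasure μ := by
    have h1 : l 1 = 1 := by
      refine tendsto_nhds_unique (hl 1) (tendsto_const_nhds.congr fun Q => ?_)
      simp [ev_apply]
    have h2 := (h 1).trans h1
    simp only [ContinuousMap.one_apply, integral_const, smul_eq_mul, mul_one] at h2
    refine ⟨?_⟩
    rw [measureReal_def] at h2
    exact (ENNReal.toReal_eq_one_iff _).1 h2
  refine ⟨KM.mk μ hp, Set.mem_univ _, ?_⟩
  rw [inducing_KM.nhds_eq_comap, ← tendsto_iff_comap, tendsto_pi_nhds]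
  intro f
  have h3 := hl f
  have h4 : l f = ∫ x, f x ∂μ := (h f).symm
  rw [h4] at h3
  exact h3

/-- The algebra generated by evaluations. -/
noncomputable def evAlg (S : Type*) [TopologicalSpace S] [MeasurableSpace S] :
    Subalgebra ℝ C(KM S, ℝ) := Algebra.adjoin ℝ (Set.range ev)

variable [BaireMeas S] [CompactSpace S] [T2Space S]

theorem exists_seq (F : C(KM S, ℝ)) :
    ∃ G : ℕ → C(KM S, ℝ), (∀ n, G n ∈ evAlg S) ∧ Tendsto G atTop (𝓝 F) := by
  have hs : (evAlg S).SeparatesPoints := by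
    intro Q R hQR
    by_contra hc
    apply hQR
    refine KM.ext (ext_integral _ _ fun f => ?_)
    by_contra hf
    exact hc ⟨ev f, ⟨ev f, Algebra.subset_adjoin ⟨f, rfl⟩, rfl⟩, hf⟩
  have := ContinuousMap.continuousMap_mem_subalgebra_closure_of_separatesPoints _ hs F
  exact mem_closure_iff_seq_limit.1 this

theorem measurable_to_KM {Ω : Type*} [MeasurableSpace Ω] (g : Ω → KM S)
    (h : ∀ f, Measurable fun ω => ev f (g ω)) : Measurable g := by
  have h1 : ∀ F ∈ evAlg S, Measurable fun ω => F (g ω) := by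
    intro F hF
    induction hF using Algebra.adjoin_induction with
    | mem x hx => obtain ⟨f, rfl⟩ := hx; exact h f
    | algebraMap r => exact measurable_const
    | add x y _ _ hx hy => exact hx.add hy
    | mul x y _ _ hx hy => exact hx.mul hy
  have h2 : ∀ F : C(KM S, ℝ), Measurable fun ω => F (g ω) := by
    intro F
    obtain ⟨G, hG, hlim⟩ := exists_seq F
    refine measurable_of_tendsto_metrizable (fun n => h1 (G n) (hG n)) ?_
    rw [tendsto_pi_nhds]
    intro ω
    exact ((ContinuousEvalConst.continuous_eval_const (g ω)).tendsto F).comp hlim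
  rw [measurable_iff_comap_le, BaireMeas.eq (X := KM S), baireSigma, MeasurableSpace.comap_iSup]
  refine iSup_le fun F => ?_
  rw [MeasurableSpace.comap_comp, ← BorelSpace.measurable_eq (α := ℝ)]
  exact (h2 F).comap_le

theorem mem_closure_range_ev {F : C(KM S, ℝ)} (hF : F ∈ Submonoid.closure (Set.range (ev (S := S)))) :
    ∃ (k : ℕ) (f : Fin k → C(S, ℝ)), F = ∏ i, ev (f i) := by
  obtain ⟨l, hl, rfl⟩ := Submonoid.exists_list_of_mem_closure hF
  have : ∀ i : Fin l.length, ∃ f, ev f = l.get i := fun i => hl _ (List.get_mem l i)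
  choose f hf using this
  refine ⟨l.length, f, ?_⟩
  simp_rw [hf]
  rw [← List.prod_ofFn, List.ofFn_get]

theorem ext_moments (μ ν : Measure (KM S)) [IsProbabilityMeasure μ] [IsProbabilityMeasure ν]
    (h : ∀ (k : ℕ) (_ : 1 ≤ k) (f : Fin k → C(S, ℝ)),
      ∫ Q, ∏ i, ev (f i) Q ∂μ = ∫ Q, ∏ i, ev (f i) Q ∂ν) : μ = ν := by
  have h1 : ∀ F ∈ evAlg S, ∫ Q, F Q ∂μ = ∫ Q, F Q ∂ν := by
    intro F hF
    have hF' : F ∈ Subalgebra.toSubmodule (evAlg S) := hF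
    rw [evAlg, Algebra.adjoin_eq_span] at hF'
    induction hF' using Submodule.span_induction with
    | mem x hx =>
      obtain ⟨k, f, rfl⟩ := mem_closure_range_ev hx
      simp only [ContinuousMap.prod_apply]
      rcases Nat.eq_zero_or_pos k with rfl | hk
      · simp
      · exact h k hk f
    | zero => simp
    | add x y hx' hy' hx hy =>
      simp only [ContinuousMap.add_apply]
      rw [integral_add (integrable_cont _ x) (integrable_cont _ y),
        integral_add (integrable_cont _ x) (integrable_cont _ y), hx, hy]
      · rw [← Subalgebra.mem_toSubmodule, evAlg, Algebra.adjoin_eq_span]; exact hy'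
      · rw [← Subalgebra.mem_toSubmodule, evAlg, Algebra.adjoin_eq_span]; exact hx'
    | smul a x hx' hx =>
      simp only [ContinuousMap.smul_apply]
      rw [integral_smul, integral_smul, hx]
      rw [← Subalgebra.mem_toSubmodule, evAlg, Algebra.adjoin_eq_span]; exact hx'
  refine ext_integral μ ν fun F => ?_
  obtain ⟨G, hG, hlim⟩ := exists_seq F
  have key : ∀ (μ : Measure (KM S)) [IsProbabilityMeasure μ],
      Tendsto (fun n => ∫ Q, G n Q ∂μ) atTop (𝓝 (∫ Q, F Q ∂μ)) := by
    intro μ _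
    obtain ⟨C, hC⟩ := (Metric.isBounded_range_of_tendsto G hlim).exists_norm_le
    refine tendsto_integral_of_dominated_convergence (fun _ => C)
      (fun n => (measurable_cont _).aestronglyMeasurable) (integrable_const _) ?_ ?_
    · intro n; filter_upwards with Q
      exact ((G n).norm_coe_le_norm Q).trans (hC _ ⟨n, rfl⟩)
    · filter_upwards with Q
      exact ((ContinuousEvalConst.continuous_eval_const Q).tendsto F).comp hlim
  refine tendsto_nhds_unique (key μ) ?_
  simp_rw [fun n => h1 (G n) (hG n)]
  exact key ν

theorem measurable_meas : Measurable (KM.meas (S := S)) := by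
  refine Measurable.measure_of_isPiSystem_of_isProbabilityMeasure
    generateFrom_posSets.symm isPiSystem_posSets ?_
  rintro _ ⟨f, rfl⟩
  have : Measurable fun Q : KM S => Q.meas.real {x | 0 < f x} := by
    refine measurable_of_tendsto_metrizable (fun n => measurable_cont (ev (approx f n))) ?_
    rw [tendsto_pi_nhds]
    intro Q
    exact tendsto_integral_approx Q.meas f
  have h := this.ennreal_ofReal
  simpa only [measureReal_def, ENNReal.ofReal_toReal (measure_ne_top _ _)] using h

theorem measurable_piMeas (k : ℕ) :
    Measurable (fun Q : KM S => Measure.pi (fun _ : Fin k => Q.meas)) := by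
  refine Measurable.measure_of_isPiSystem_of_isProbabilityMeasure
    (generateFrom_boxes k).symm (isPiSystem_boxes k) ?_
  rintro _ ⟨s, hs, rfl⟩
  simp_rw [Measure.pi_pi]
  refine Finset.measurable_prod _ fun i _ => ?_
  have hsi : MeasurableSet (s i) := by
    obtain ⟨f, hf⟩ := hs i (Set.mem_univ i)
    rw [hf]; exact measurableSet_pos f
  exact (Measure.measurable_coe hsi).comp measurable_meas

/-- The kernel of product measures. -/
noncomputable def piK (S : Type*) [TopologicalSpace S] [MeasurableSpace S] [BaireMeas S]
    [CompactSpace S] [T2Space S] (k : ℕ) : ProbabilityTheory.Kernel (KM S) (Fin k → S) :=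
  ⟨fun Q => Measure.pi (fun _ : Fin k => Q.meas), measurable_piMeas k⟩

instance (k : ℕ) : ProbabilityTheory.IsMarkovKernel (piK S k) :=
  ⟨fun Q => inferInstanceAs (IsProbabilityMeasure (Measure.pi (fun _ : Fin k => Q.meas)))⟩

theorem norm_prod_le {k : ℕ} (f : Fin k → C(S, ℝ)) (x : Fin k → S) :
    ‖∏ i, f i (x i)‖ ≤ ∏ i, ‖f i‖ := by
  rw [norm_prod]
  exact Finset.prod_le_prod (fun i _ => norm_nonneg _) fun i _ => (f i).norm_coe_le_norm _

theorem integral_bind_piK (μ : Measure (KM S)) [IsProbabilityMeasure μ] {k : ℕ}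
    (f : Fin k → C(S, ℝ)) :
    ∫ x, ∏ i, f i (x i) ∂(μ.bind (piK S k)) = ∫ Q, ∏ i, ev (f i) Q ∂μ := by
  have hi : Integrable (fun x : Fin k → S => ∏ i, f i (x i))
      (((piK S k).comp (ProbabilityTheory.Kernel.const Unit μ)) ()) :=
    Integrable.of_bound (measurable_prod_cont f).aestronglyMeasurable (∏ i, ‖f i‖)
      (Eventually.of_forall fun x => norm_prod_le f x)
  have := ProbabilityTheory.Kernel.integral_comp hi
  rw [ProbabilityTheory.Kernel.comp_apply, ProbabilityTheory.Kernel.const_apply] at this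
  rw [this]
  refine integral_congr_ae (Eventually.of_forall fun Q => ?_)
  exact integral_fintype_prod_eq_prod (fun i x => f i x)

end Space

section Main

variable {S : Type*} [TopologicalSpace S] [MeasurableSpace S]
variable [BaireMeas S] [CompactSpace S] [T2Space S]

theorem exists_perm {k N : ℕ} (φ : Fin k → Fin N) (hφ : Function.Injective φ) :
    ∃ (hk : k ≤ N) (σ : Equiv.Perm (Fin N)), ∀ i : Fin k, σ (Fin.castLE hk i) = φ i := by
  have hk : k ≤ N := by simpa using Fintype.card_le_of_injective φ hφ
  refine ⟨hk, ?_⟩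
  let f : Fin N → Fin N := fun j => if h : (j : ℕ) < k then φ ⟨j, h⟩ else j
  obtain ⟨g, hg⟩ := Finset.exists_equiv_extend_of_card_eq (α := Fin N) (t := (Finset.univ : Finset (Fin N)))
    (by simp) (s := Finset.univ.filter fun j : Fin N => (j : ℕ) < k) (f := f)
    (Finset.subset_univ _) (by
      intro a ha b hb hab
      have ha' : (a : ℕ) < k := by simpa using ha
      have hb' : (b : ℕ) < k := by simpa using hb
      simp only [f, ha', hb', dif_pos] at hab
      have := hφ hab
      rw [Fin.mk.injEq] at this
      exact Fin.ext this)
  refine ⟨g.trans (Equiv.subtypeUnivEquiv fun x => Finset.mem_univ x), fun i => ?_⟩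
  have := hg (Fin.castLE hk i) (by simp)
  simpa [f] using this

/-- Exchangeability hypothesis. -/
def Exch (P : Measure (ℕ → S)) : Prop := ∀ (m : ℕ) (σ : Equiv.Perm (Fin m)),
      P.map (fun ω i => if h : i < m then ω (σ ⟨i, h⟩) else ω i) = P

theorem measurable_prod_coord {k : ℕ} (f : Fin k → C(S, ℝ)) (φ : Fin k → ℕ) :
    Measurable (fun ω : ℕ → S => ∏ i, f i (ω (φ i))) :=
  Finset.measurable_prod _ fun i _ => (measurable_cont (f i)).comp (measurable_pi_apply (φ i))

theorem integrable_prod_coord (P : Measure (ℕ → S)) [IsProbabilityMeasure P]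
    {k : ℕ} (f : Fin k → C(S, ℝ)) (φ : Fin k → ℕ) :
    Integrable (fun ω : ℕ → S => ∏ i, f i (ω (φ i))) P :=
  Integrable.of_bound (measurable_prod_coord f φ).aestronglyMeasurable (∏ i, ‖f i‖)
      (Eventually.of_forall fun ω => norm_prod_le f fun i => ω (φ i))

theorem exch_integral {P : Measure (ℕ → S)} (hP : Exch P) {k N : ℕ} (f : Fin k → C(S, ℝ))
    (φ : Fin k → Fin N) (hφ : Function.Injective φ) :
    ∫ ω, ∏ i, f i (ω (φ i)) ∂P = ∫ ω, ∏ i, f i (ω (i : ℕ)) ∂P := by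
  obtain ⟨hk, σ, hσ⟩ := exists_perm φ hφ
  have hm : Measurable (fun (ω : ℕ → S) (i : ℕ) => if h : i < N then ω (σ ⟨i, h⟩) else ω i) := by
    refine measurable_pi_lambda _ fun i => ?_
    by_cases h : i < N
    · simp only [h, dif_pos]; exact measurable_pi_apply _
    · simp only [h, dif_neg, not_false_eq_true]; exact measurable_pi_apply _
  conv_rhs => rw [← hP N σ]
  rw [integral_map hm.aemeasurable
    (measurable_prod_coord f (fun i => (i : ℕ))).aestronglyMeasurable]
  refine integral_congr_ae (Eventually.of_forall fun ω => ?_)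
  refine Finset.prod_congr rfl fun i _ => ?_
  have h : (i : ℕ) < N := i.2.trans_le hk
  simp only [h, dif_pos]
  rw [← hσ i]
  rfl

theorem card_noninj (k N : ℕ) :
    ((Finset.univ.filter fun φ : Fin k → Fin N => ¬ Function.Injective φ).card : ℝ)
      ≤ (N : ℝ) ^ k - ((N + 1 - k : ℕ) : ℝ) ^ k := by
  classical
  have h1 : (Finset.univ.filter fun φ : Fin k → Fin N => Function.Injective φ).card
      = N.descFactorial k := by
    rw [← Fintype.card_subtype, Fintype.card_congr (Equiv.subtypeInjectiveEquivEmbedding _ _),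
      Fintype.card_embedding_eq]
    simp
  have h2 := Finset.card_filter_add_card_filter_not (s := (Finset.univ : Finset (Fin k → Fin N)))
    (fun φ => Function.Injective φ)
  rw [h1] at h2
  simp only [Finset.card_univ, Fintype.card_pi, Fintype.card_fin, Finset.prod_const] at h2
  have h3 := Nat.pow_sub_le_descFactorial N k
  have h2' : (N.descFactorial k : ℝ) +
    ((Finset.univ.filter fun φ : Fin k → Fin N => ¬ Function.Injective φ).card : ℝ) = (N : ℝ) ^ k := by
    exact_mod_cast h2
  have h3' : ((N + 1 - k : ℕ) : ℝ) ^ k ≤ (N.descFactorial k : ℝ) := by exact_mod_cast h3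
  linarith

theorem moment_bound {P : Measure (ℕ → S)} [IsProbabilityMeasure P] (hP : Exch P) {k : ℕ}
    (f : Fin k → C(S, ℝ)) (N : ℕ) (hN : 0 < N) :
    |∫ ω, ∏ i, ((N : ℝ)⁻¹ * ∑ j : Fin N, f i (ω (j : ℕ))) ∂P - ∫ ω, ∏ i, f i (ω (i : ℕ)) ∂P|
      ≤ 2 * (∏ i, ‖f i‖) * (1 - (((N + 1 - k : ℕ) : ℝ) / N) ^ k) := by
  classical
  set m := ∫ ω, ∏ i, f i (ω (i : ℕ)) ∂P with hm
  set C := ∏ i, ‖f i‖ with hC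
  have hC0 : 0 ≤ C := Finset.prod_nonneg fun i _ => norm_nonneg _
  have hN' : (0 : ℝ) < N := by exact_mod_cast hN
  let I : (Fin k → Fin N) → ℝ := fun φ => ∫ ω, ∏ i, f i (ω (φ i)) ∂P
  have hI : ∀ φ, |I φ| ≤ C := fun φ => by
    have := norm_integral_le_of_norm_le_const (μ := P)
      (f := fun ω => ∏ i, f i (ω (φ i)))
      (Eventually.of_forall fun ω => norm_prod_le f fun i => ω (φ i))
    simpa using this
  have hmC : |m| ≤ C := by
    have := norm_integral_le_of_norm_le_const (μ := P)
      (f := fun ω => ∏ i, f i (ω (i : ℕ)))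
      (Eventually.of_forall fun ω => norm_prod_le f fun i => ω (i : ℕ))
    simpa using this
  have e1 : ∫ ω, ∏ i, ((N : ℝ)⁻¹ * ∑ j : Fin N, f i (ω (j : ℕ))) ∂P
      = ((N : ℝ) ^ k)⁻¹ * ∑ φ, I φ := by
    simp only [Finset.prod_mul_distrib, Finset.prod_const, Finset.card_univ, Fintype.card_fin]
    rw [integral_const_mul, inv_pow]
    congr 1
    rw [← integral_finset_sum _ fun φ _ => integrable_prod_coord P f fun i => (φ i : ℕ)]
    refine integral_congr_ae (Eventually.of_forall fun ω => ?_)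
    simp only [Finset.prod_univ_sum, Fintype.piFinset_univ]
  have e2 : ((N : ℝ) ^ k)⁻¹ * ∑ φ, I φ - m = ((N : ℝ) ^ k)⁻¹ * ∑ φ, (I φ - m) := by
    rw [Finset.sum_sub_distrib, Finset.sum_const]
    simp only [Finset.card_univ, Fintype.card_pi, Fintype.card_fin, Finset.prod_const, nsmul_eq_mul]
    push_cast
    field_simp
  rw [e1, e2, abs_mul, abs_of_pos (by positivity)]
  have e3 : |∑ φ, (I φ - m)| ≤
      (Finset.univ.filter fun φ : Fin k → Fin N => ¬ Function.Injective φ).card * (2 * C) := by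
    rw [← Finset.sum_filter_add_sum_filter_not Finset.univ
      (fun φ : Fin k → Fin N => Function.Injective φ)]
    rw [Finset.sum_eq_zero, zero_add]
    · refine (Finset.abs_sum_le_sum_abs _ _).trans ?_
      rw [← nsmul_eq_mul]
      refine Finset.sum_le_card_nsmul _ _ _ fun φ _ => ?_
      have := abs_sub (I φ) m
      linarith [hI φ]
    · intro φ hφ
      rw [Finset.mem_filter] at hφ
      exact sub_eq_zero.2 (exch_integral hP f φ hφ.2)
  have e4 := card_noninj k N
  calc ((N : ℝ) ^ k)⁻¹ * |∑ φ, (I φ - m)|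
      ≤ ((N : ℝ) ^ k)⁻¹ * (((N : ℝ) ^ k - ((N + 1 - k : ℕ) : ℝ) ^ k) * (2 * C)) := by
        gcongr
        exact e3.trans (by gcongr)
    _ = 2 * C * (1 - (((N + 1 - k : ℕ) : ℝ) / N) ^ k) := by
        rw [div_pow]; field_simp

theorem moment_tendsto {P : Measure (ℕ → S)} [IsProbabilityMeasure P] (hP : Exch P) {k : ℕ}
    (f : Fin k → C(S, ℝ)) :
    Tendsto (fun n : ℕ => ∫ ω, ∏ i, (((n + 1 : ℕ) : ℝ)⁻¹ * ∑ j : Fin (n + 1), f i (ω (j : ℕ))) ∂P)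
      atTop (𝓝 (∫ ω, ∏ i, f i (ω (i : ℕ)) ∂P)) := by
  rw [tendsto_iff_dist_tendsto_zero]
  have h0 : Tendsto (fun N : ℕ => ((N + 1 - k : ℕ) : ℝ) / N) atTop (𝓝 1) := by
    have h : Tendsto (fun N : ℕ => 1 + (1 - (k : ℝ)) / N) atTop (𝓝 (1 + 0)) :=
      tendsto_const_nhds.add (tendsto_const_div_atTop_nhds_zero_nat _)
    rw [add_zero] at h
    refine h.congr' ?_
    filter_upwards [eventually_ge_atTop (k + 1)] with N hN
    have hN' : (0 : ℝ) < N := by exact_mod_cast (by omega : 0 < N)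
    rw [Nat.cast_sub (by omega)]
    push_cast
    field_simp
    ring
  have h1 : Tendsto (fun N : ℕ => 2 * (∏ i, ‖f i‖) * (1 - (((N + 1 - k : ℕ) : ℝ) / N) ^ k))
      atTop (𝓝 0) := by
    have := ((h0.pow k).const_sub 1).const_mul (2 * (∏ i, ‖f i‖))
    simpa using this
  refine squeeze_zero (fun _ => dist_nonneg) (fun n => ?_) (h1.comp (tendsto_add_atTop_nat 1))
  rw [Real.dist_eq]
  exact moment_bound hP f (n + 1) (Nat.succ_pos n)

/-- Empirical measure. -/
noncomputable def empM (n : ℕ) (ω : ℕ → S) : Measure S :=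
  (((n + 1 : ℕ) : ℝ≥0∞)⁻¹) • ∑ j : Fin (n + 1), Measure.dirac (ω (j : ℕ))

instance (n : ℕ) (ω : ℕ → S) : IsProbabilityMeasure (empM n ω) := by
  refine ⟨?_⟩
  simp only [empM, Measure.smul_apply, Measure.finsetSum_apply, measure_univ, Finset.sum_const,
    Finset.card_univ, Fintype.card_fin, smul_eq_mul, nsmul_eq_mul, mul_one]
  exact ENNReal.inv_mul_cancel (by simp) (by finiteness)

/-- Empirical measure as a point of the space. -/
noncomputable def emp (n : ℕ) (ω : ℕ → S) : KM S := KM.mk (empM n ω) inferInstance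

theorem ev_emp (n : ℕ) (ω : ℕ → S) (f : C(S, ℝ)) :
    ev f (emp n ω) = ((n + 1 : ℕ) : ℝ)⁻¹ * ∑ j : Fin (n + 1), f (ω (j : ℕ)) := by
  rw [ev_apply, emp, KM.mk_meas, empM, integral_smul_measure, integral_finset_sum_measure]
  · simp only [integral_dirac' _ _ (measurable_cont f).stronglyMeasurable]
    rw [ENNReal.toReal_inv, ENNReal.toReal_natCast, smul_eq_mul]
  · intro j _
    exact integrable_cont _ f

theorem measurable_emp (n : ℕ) : Measurable (emp (S := S) n) := by
  refine measurable_to_KM _ fun f => ?_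
  simp_rw [ev_emp]
  refine Measurable.const_mul (Finset.measurable_sum _ fun j _ => ?_) _
  exact (measurable_cont f).comp (measurable_pi_apply _)

theorem exists_moments {P : Measure (ℕ → S)} [IsProbabilityMeasure P] (hP : Exch P) :
    ∃ μ : Measure (KM S), IsProbabilityMeasure μ ∧ ∀ (k : ℕ) (f : Fin k → C(S, ℝ)),
      ∫ Q, ∏ i, ev (f i) Q ∂μ = ∫ ω, ∏ i, f i (ω (i : ℕ)) ∂P := by
  have hp : ∀ n, IsProbabilityMeasure (P.map (emp n)) := fun n =>
    Measure.isProbabilityMeasure_map (measurable_emp n).aemeasurable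
  let M : ℕ → KM (KM S) := fun n => KM.mk (P.map (emp n)) (hp n)
  obtain ⟨R, -, hR⟩ := isCompact_iff_ultrafilter_le_nhds.1 (isCompact_univ (X := KM (KM S)))
    ((hyperfilter ℕ).map M) (by simp)
  refine ⟨R.meas, inferInstance, fun k f => ?_⟩
  let F : C(KM S, ℝ) := ∏ i, ev (f i)
  have h1 : Tendsto (fun n => ev F (M n)) (hyperfilter ℕ) (𝓝 (ev F R)) :=
    ((ev F).continuous.tendsto R).comp hR
  have h2 : Tendsto (fun n => ev F (M n)) (hyperfilter ℕ)
      (𝓝 (∫ ω, ∏ i, f i (ω (i : ℕ)) ∂P)) := by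
    have := (moment_tendsto hP f).mono_left Nat.hyperfilter_le_atTop
    refine this.congr fun n => ?_
    rw [ev_apply, KM.mk_meas, integral_map (measurable_emp n).aemeasurable
      (measurable_cont F).aestronglyMeasurable]
    simp only [F, ContinuousMap.prod_apply, ev_emp]
  have h3 := tendsto_nhds_unique h1 h2
  rw [ev_apply] at h3
  simpa only [F, ContinuousMap.prod_apply] using h3

theorem measurable_proj (k : ℕ) : Measurable (fun (ω : ℕ → S) (i : Fin k) => ω (i : ℕ)) :=
  measurable_pi_lambda _ fun _ => measurable_pi_apply _

theorem integral_proj (P : Measure (ℕ → S)) {k : ℕ} (f : Fin k → C(S, ℝ)) :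
    ∫ x, ∏ i, f i (x i) ∂(P.map (fun ω (i : Fin k) => ω (i : ℕ)))
      = ∫ ω, ∏ i, f i (ω (i : ℕ)) ∂P :=
  integral_map (measurable_proj k).aemeasurable (measurable_prod_cont f).aestronglyMeasurable

theorem bind_apply_piK (μ : Measure (KM S)) {k : ℕ} {A : Set (Fin k → S)} (hA : MeasurableSet A) :
    μ.bind (piK S k) A = ∫⁻ Q, Measure.pi (fun _ : Fin k => Q.meas) A ∂μ :=
  Measure.bind_apply hA (piK S k).measurable.aemeasurable

theorem main {P : Measure (ℕ → S)} [IsProbabilityMeasure P] (hP : Exch P) :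
    ∃! μ : Measure (KM S), ∀ (k : ℕ) (_hk : 1 ≤ k) (A : Set (Fin k → S)), MeasurableSet A →
        P.map (fun ω (i : Fin k) => ω (i : ℕ)) A =
          ∫⁻ Q, Measure.pi (fun _ : Fin k => Q.meas) A ∂μ := by
  have hpr : ∀ k, IsProbabilityMeasure (P.map (fun ω (i : Fin k) => ω (i : ℕ))) := fun k =>
    Measure.isProbabilityMeasure_map (measurable_proj k).aemeasurable
  obtain ⟨μ, hμ, h⟩ := exists_moments hP
  refine ⟨μ, ?_, ?_⟩
  · intro k _ A hA
    rw [← bind_apply_piK μ hA]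
    congr 1
    refine ext_integral_pi _ _ fun f => ?_
    rw [integral_proj, integral_bind_piK, h]
  · intro ν hν
    have hν1 : IsProbabilityMeasure ν := by
      have := hν 1 le_rfl Set.univ MeasurableSet.univ
      simp only [measure_univ, lintegral_const, one_mul] at this
      exact ⟨this.symm⟩
    refine ext_moments ν μ fun k hk f => ?_
    have hb : ν.bind (piK S k) = P.map (fun ω (i : Fin k) => ω (i : ℕ)) := by
      ext A hA
      rw [bind_apply_piK ν hA, hν k hk A hA]
    rw [h, ← integral_bind_piK, hb, integral_proj]

end Main

end HS

/-- **The Hewitt–Savage representation theorem.** Let `S` be a compact Hausdorff space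
equipped with its Baire σ-algebra. If `P` is the law of an exchangeable process
`{Xₙ ; n ≥ 1}` with values in `S`, then there exists a unique measure `μ` on the Baire
σ-algebra of `ℳ(S)` such that, for each `k ≥ 1`, the law `P_k` of `X₁,…,X_k` admits the
representation `P_k = M_{k,μ}`, i.e. `P_k(A) = ∫_{ℳ(S)} Q^k(A) dμ(Q)` for all `A` in the
product σ-algebra on `S^k`. -/
theorem hewitt_savage
    {S : Type*} [TopologicalSpace S] [CompactSpace S] [T2Space S]
    [mS : MeasurableSpace S] (hmS : mS = baireSigma S)
    (P : Measure (ℕ → S)) [IsProbabilityMeasure P]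
    (hexch : ∀ (m : ℕ) (σ : Equiv.Perm (Fin m)),
      P.map (fun ω i => if h : i < m then ω (σ ⟨i, h⟩) else ω i) = P) :
    ∃! μ : @Measure (ProbabilityMeasure S) (baireOnProbabilityMeasures S),
      ∀ (k : ℕ) (_hk : 1 ≤ k) (A : Set (Fin k → S)), MeasurableSet A →
        P.map (fun ω (i : Fin k) => ω (i : ℕ)) A =
          @lintegral (ProbabilityMeasure S) (baireOnProbabilityMeasures S) μ
            (fun Q => Measure.pi (fun _ : Fin k => (Q : Measure S)) A) := by
  haveI : HS.BaireMeas S := ⟨hmS⟩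
  exact HS.main (S := S) (P := P) hexch
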